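/- (Comparison principle for the stationary problem with the zero set 𝒜 as boundary.) Assume H_i(x,p) = F_i(x,p) − f_i(x) with F_i, f_i satisfying (A1)–(A5). Let (u₁, u₂) be a pair of upper semicontinuous functions on 𝕋^n that is a viscosity subsolution of (S1), and let (v₁, v₂) be a pair of lower semicontinuous functions on 𝕋^n that is a viscosity supersolution of (S1). If u_i ≤ v_i on 𝒜 for i = 1,2, then u_i ≤ v_i on all of 𝕋^n for i = 1,2. -/

import Mathlib

open MeasureTheory Filter Topology Set

noncomputable section

/-- Euclidean space `ℝ^n`; the torus `𝕋^n` is modelled by `ℤ^n`-periodic functions on it. -/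
abbrev En (n : ℕ) : Type := EuclideanSpace ℝ (Fin n)

/-- The integer vector `k ∈ ℤ^n` viewed as an element of `ℝ^n`. -/
def intVec (n : ℕ) (k : Fin n → ℤ) : En n := WithLp.toLp 2 (fun i => (k i : ℝ))

/-- A `ℤ^n`-periodic function on `ℝ^n`, i.e. a function on the torus `𝕋^n`. -/
def ZPeriodic {n : ℕ} (f : En n → ℝ) : Prop :=
  ∀ (x : En n) (k : Fin n → ℤ), f (x + intVec n k) = f x

/-- A Hamiltonian `H : 𝕋^n × ℝ^n → ℝ` (periodic in the first variable). -/
def ZPeriodicH {n : ℕ} (H : En n → En n → ℝ) : Prop :=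
  ∀ (x : En n) (k : Fin n → ℤ) (p : En n), H (x + intVec n k) p = H x p

/-- A function on `𝕋^n × ℝ` (space-time, periodic in space). -/
def ZPeriodicST {n : ℕ} (u : En n × ℝ → ℝ) : Prop :=
  ∀ (x : En n) (k : Fin n → ℤ) (t : ℝ), u (x + intVec n k, t) = u (x, t)

/-- (A1): coercivity, `lim_{r→∞} inf{H(x,p) : x ∈ 𝕋^n, |p| ≥ r} = ∞`. -/
def Coercive {n : ℕ} (H : En n → En n → ℝ) : Prop :=
  ∀ M : ℝ, ∃ r : ℝ, ∀ (x p : En n), r ≤ ‖p‖ → M ≤ H x p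

/-- Coercivity for an `x`-independent Hamiltonian. -/
def CoerciveP {n : ℕ} (H : En n → ℝ) : Prop :=
  ∀ M : ℝ, ∃ r : ℝ, ∀ p : En n, r ≤ ‖p‖ → M ≤ H p

/-- Lipschitz continuity (membership in `W^{1,∞}`). -/
def IsLip {n : ℕ} (f : En n → ℝ) : Prop := ∃ K : NNReal, LipschitzWith K f

/-- Viscosity subsolution inequality for one stationary equation
`H(x, Dw) + c (w - wo) ≤ ρ(x)` of a weakly coupled system. -/
def StatSubIneq {n : ℕ} (H : En n → En n → ℝ) (c : ℝ) (w wo : En n → ℝ) (ρ : En n → ℝ) : Prop :=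
  ∀ φ : En n → ℝ, ContDiff ℝ 1 φ →
    ∀ x₀ : En n, IsLocalMax (fun x => w x - φ x) x₀ →
      H x₀ (gradient φ x₀) + c * (w x₀ - wo x₀) ≤ ρ x₀

/-- Viscosity supersolution inequality for one stationary equation. -/
def StatSuperIneq {n : ℕ} (H : En n → En n → ℝ) (c : ℝ) (w wo : En n → ℝ) (ρ : En n → ℝ) : Prop :=
  ∀ φ : En n → ℝ, ContDiff ℝ 1 φ →
    ∀ x₀ : En n, IsLocalMin (fun x => w x - φ x) x₀ →
      ρ x₀ ≤ H x₀ (gradient φ x₀) + c * (w x₀ - wo x₀)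

/-- Viscosity subsolution of the stationary system
`Hᵢ(x, Dwᵢ) + cᵢ (wᵢ - wⱼ) = ρᵢ(x)`, `i = 1,2`. -/
def CellSub {n : ℕ} (H₁ H₂ : En n → En n → ℝ) (c₁ c₂ : ℝ) (w₁ w₂ : En n → ℝ)
    (ρ₁ ρ₂ : En n → ℝ) : Prop :=
  StatSubIneq H₁ c₁ w₁ w₂ ρ₁ ∧ StatSubIneq H₂ c₂ w₂ w₁ ρ₂

/-- Viscosity supersolution of the stationary system. -/
def CellSuper {n : ℕ} (H₁ H₂ : En n → En n → ℝ) (c₁ c₂ : ℝ) (w₁ w₂ : En n → ℝ)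
    (ρ₁ ρ₂ : En n → ℝ) : Prop :=
  StatSuperIneq H₁ c₁ w₁ w₂ ρ₁ ∧ StatSuperIneq H₂ c₂ w₂ w₁ ρ₂

/-- Viscosity solution (continuous, sub- and supersolution) of the stationary system. -/
def CellSolution {n : ℕ} (H₁ H₂ : En n → En n → ℝ) (c₁ c₂ : ℝ) (v₁ v₂ : En n → ℝ)
    (ρ₁ ρ₂ : En n → ℝ) : Prop :=
  Continuous v₁ ∧ Continuous v₂ ∧
    CellSub H₁ H₂ c₁ c₂ v₁ v₂ ρ₁ ρ₂ ∧ CellSuper H₁ H₂ c₁ c₂ v₁ v₂ ρ₁ ρ₂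

/-- Subsolution of the ergodic problem (E) with constant `c` (coupling constants 1). -/
def ErgSub {n : ℕ} (H₁ H₂ : En n → En n → ℝ) (v₁ v₂ : En n → ℝ) (c : ℝ) : Prop :=
  CellSub H₁ H₂ 1 1 v₁ v₂ (fun _ => c) (fun _ => c)

/-- Supersolution of the ergodic problem (E). -/
def ErgSuper {n : ℕ} (H₁ H₂ : En n → En n → ℝ) (v₁ v₂ : En n → ℝ) (c : ℝ) : Prop :=
  CellSuper H₁ H₂ 1 1 v₁ v₂ (fun _ => c) (fun _ => c)

/-- Viscosity solution of the ergodic problem (E):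
`H₁(x,Dv₁) + v₁ - v₂ = c`, `H₂(x,Dv₂) + v₂ - v₁ = c` on `𝕋^n`. -/
def ErgSolution {n : ℕ} (H₁ H₂ : En n → En n → ℝ) (v₁ v₂ : En n → ℝ) (c : ℝ) : Prop :=
  CellSolution H₁ H₂ 1 1 v₁ v₂ (fun _ => c) (fun _ => c)

/-- Viscosity subsolution inequality for one evolution equation
`∂ₜ u + H(x, Du) + u - uo ≤ 0` in `𝕋^n × (0,∞)`. -/
def EvolSubIneq {n : ℕ} (H : En n → En n → ℝ) (u uo : En n × ℝ → ℝ) : Prop :=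
  ∀ φ : En n × ℝ → ℝ, ContDiff ℝ 1 φ →
    ∀ (x₀ : En n) (t₀ : ℝ), 0 < t₀ →
      IsLocalMax (fun q => u q - φ q) (x₀, t₀) →
      fderiv ℝ φ (x₀, t₀) (0, 1) + H x₀ (gradient (fun y => φ (y, t₀)) x₀)
        + u (x₀, t₀) - uo (x₀, t₀) ≤ 0

/-- Viscosity supersolution inequality for one evolution equation. -/
def EvolSuperIneq {n : ℕ} (H : En n → En n → ℝ) (u uo : En n × ℝ → ℝ) : Prop :=
  ∀ φ : En n × ℝ → ℝ, ContDiff ℝ 1 φ →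
    ∀ (x₀ : En n) (t₀ : ℝ), 0 < t₀ →
      IsLocalMin (fun q => u q - φ q) (x₀, t₀) →
      0 ≤ fderiv ℝ φ (x₀, t₀) (0, 1) + H x₀ (gradient (fun y => φ (y, t₀)) x₀)
        + u (x₀, t₀) - uo (x₀, t₀)

/-- Viscosity subsolution of system (C) (with coupling constants `c₁ = c₂ = 1`). -/
def SysSub {n : ℕ} (H₁ H₂ : En n → En n → ℝ) (u₁ u₂ : En n × ℝ → ℝ) : Prop :=
  EvolSubIneq H₁ u₁ u₂ ∧ EvolSubIneq H₂ u₂ u₁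

/-- Viscosity supersolution of system (C). -/
def SysSuper {n : ℕ} (H₁ H₂ : En n → En n → ℝ) (u₁ u₂ : En n × ℝ → ℝ) : Prop :=
  EvolSuperIneq H₁ u₁ u₂ ∧ EvolSuperIneq H₂ u₂ u₁

/-- Viscosity solution of the Cauchy problem (C): continuous on `𝕋^n × [0,∞)`,
sub- and supersolution, attaining the initial data. -/
def SysSolution {n : ℕ} (H₁ H₂ : En n → En n → ℝ) (u₀₁ u₀₂ : En n → ℝ)
    (u₁ u₂ : En n × ℝ → ℝ) : Prop :=
  ContinuousOn u₁ {q : En n × ℝ | 0 ≤ q.2} ∧ ContinuousOn u₂ {q : En n × ℝ | 0 ≤ q.2} ∧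
    SysSub H₁ H₂ u₁ u₂ ∧ SysSuper H₁ H₂ u₁ u₂ ∧
    (∀ x, u₁ (x, 0) = u₀₁ x) ∧ (∀ x, u₂ (x, 0) = u₀₂ x)

/-- Viscosity subsolution of the single stationary equation `H(x,Dv) ≤ c` on `𝕋^n`. -/
def SingleSub {n : ℕ} (H : En n → En n → ℝ) (v : En n → ℝ) (c : ℝ) : Prop :=
  ∀ φ : En n → ℝ, ContDiff ℝ 1 φ →
    ∀ x₀ : En n, IsLocalMax (fun x => v x - φ x) x₀ → H x₀ (gradient φ x₀) ≤ c

/-- Viscosity supersolution of the single stationary equation `H(x,Dv) ≥ c` on `𝕋^n`. -/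
def SingleSuper {n : ℕ} (H : En n → En n → ℝ) (v : En n → ℝ) (c : ℝ) : Prop :=
  ∀ φ : En n → ℝ, ContDiff ℝ 1 φ →
    ∀ x₀ : En n, IsLocalMin (fun x => v x - φ x) x₀ → c ≤ H x₀ (gradient φ x₀)

/-- Viscosity solution of the single stationary equation `H(x,Dv) = c` on `𝕋^n`. -/
def SingleSolution {n : ℕ} (H : En n → En n → ℝ) (v : En n → ℝ) (c : ℝ) : Prop :=
  Continuous v ∧ SingleSub H v c ∧ SingleSuper H v c

/-- Uniform convergence `u(·,t) → v` on `𝕋^n` as `t → ∞`. -/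
def UnifTendsTo {n : ℕ} (u : En n × ℝ → ℝ) (v : En n → ℝ) : Prop :=
  ∀ ε : ℝ, 0 < ε → ∃ T : ℝ, ∀ t : ℝ, T ≤ t → ∀ x : En n, |u (x, t) - v x| ≤ ε

/-- (A8)⁺ at level `η` with constant `ψ`. -/
def A8plusAt {n : ℕ} (H : En n → En n → ℝ) (η ψ : ℝ) : Prop :=
  ∀ (x p q : En n), η ≤ H x (p + q) → H x q ≤ 0 →
    ∀ μ : ℝ, 0 < μ → μ ≤ 1 → H x (p + q) + ψ * (1 - μ) ≤ μ * H x (μ⁻¹ • p + q)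

/-- (A8)⁻ at level `η` with constant `ψ`. -/
def A8minusAt {n : ℕ} (H : En n → En n → ℝ) (η ψ : ℝ) : Prop :=
  ∀ (x p q : En n), H x (p + q) ≤ -η → 0 ≤ H x q →
    ∀ μ : ℝ, 1 ≤ μ → μ * H x (μ⁻¹ • p + q) ≤ H x (p + q) - ψ * (μ - 1) / μ

/-- (A8)⁺ with threshold `η₀`. -/
def A8plus {n : ℕ} (H : En n → En n → ℝ) (η₀ : ℝ) : Prop :=
  ∀ η : ℝ, 0 < η → η ≤ η₀ → ∃ ψ : ℝ, 0 < ψ ∧ A8plusAt H η ψ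

/-- (A8)⁻ with threshold `η₀`. -/
def A8minus {n : ℕ} (H : En n → En n → ℝ) (η₀ : ℝ) : Prop :=
  ∀ η : ℝ, 0 < η → η ≤ η₀ → ∃ ψ : ℝ, 0 < ψ ∧ A8minusAt H η ψ

/-- The function `F` of the Key Lemma: `F(r) = C r` for `r ≥ 0`, `F(r) = r / C` for `r < 0`. -/
def Fc (C r : ℝ) : ℝ := if 0 ≤ r then C * r else r / C

/-- `α_η⁺(s)` (resp. `β_η⁺(s)` with `u = u₂`):
`min_{x ∈ 𝕋^n, t ≥ s} (u(x,t) - v(x) + η (t-s)) / (u(x,s) - v(x))`. -/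
def alphaPlus {n : ℕ} (u : En n × ℝ → ℝ) (v : En n → ℝ) (η s : ℝ) : ℝ :=
  sInf {r : ℝ | ∃ (x : En n) (t : ℝ), s ≤ t ∧
    r = (u (x, t) - v x + η * (t - s)) / (u (x, s) - v x)}

/-- `α_η⁻(s)` (resp. `β_η⁻(s)` with `u = u₂`):
`max_{x ∈ 𝕋^n, t ≥ s} (u(x,t) - v(x) - η (t-s)) / (u(x,s) - v(x))`. -/
def alphaMinus {n : ℕ} (u : En n × ℝ → ℝ) (v : En n → ℝ) (η s : ℝ) : ℝ :=
  sSup {r : ℝ | ∃ (x : En n) (t : ℝ), s ≤ t ∧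
    r = (u (x, t) - v x - η * (t - s)) / (u (x, s) - v x)}

/-- (A9)⁺. -/
def A9plus {n : ℕ} (H : En n → En n → ℝ) : Prop :=
  ∃ K : Set (En n), IsClosed K ∧ (∀ x ∈ K, ∀ k : Fin n → ℤ, x + intVec n k ∈ K) ∧
    (∀ x ∈ K, (∀ p : En n, 0 ≤ H x p) ∧ ∃ p : En n, H x p = 0) ∧
    (∀ ε : ℝ, 0 < ε → ∃ η₀ : ℝ, 0 < η₀ ∧ ∃ ψ : ℝ → ℝ, (∀ r : ℝ, 0 < r → 0 < ψ r) ∧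
      ∀ η : ℝ, 0 < η → η ≤ η₀ → ∀ (x p q : En n), ε ≤ Metric.infDist x K →
        η ≤ H x (p + q) → H x q ≤ 0 →
        ∀ μ : ℝ, 0 < μ → μ ≤ 1 → H x (p + q) + ψ η * (1 - μ) ≤ μ * H x (μ⁻¹ • p + q))

/-- (A9)⁻. -/
def A9minus {n : ℕ} (H : En n → En n → ℝ) : Prop :=
  ∃ K : Set (En n), IsClosed K ∧ (∀ x ∈ K, ∀ k : Fin n → ℤ, x + intVec n k ∈ K) ∧
    (∀ x ∈ K, (∀ p : En n, 0 ≤ H x p) ∧ ∃ p : En n, H x p = 0) ∧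
    (∀ ε : ℝ, 0 < ε → ∃ η₀ : ℝ, 0 < η₀ ∧ ∃ ψ : ℝ → ℝ, (∀ r : ℝ, 0 < r → 0 < ψ r) ∧
      ∀ η : ℝ, 0 < η → η ≤ η₀ → ∀ (x p q : En n), ε ≤ Metric.infDist x K →
        H x (p + q) ≤ -η → 0 ≤ H x q →
        ∀ μ : ℝ, 1 ≤ μ → μ * H x (μ⁻¹ • p + q) ≤ H x (p + q) - ψ η * (μ - 1) / μ)

/-- (A6): uniform convexity of an `x`-independent Hamiltonian. -/
def UnifConvex {n : ℕ} (H : En n → ℝ) : Prop :=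
  ∃ α : ℝ, 0 < α ∧ ∀ᵐ q : En n ∂volume, DifferentiableAt ℝ H q ∧
    ∀ p : En n, H q + fderiv ℝ H q (p - q) + α * ‖p - q‖ ^ 2 ≤ H p

end


theorem cmp_grad_sq {n : ℕ} (a c : ℝ) (y z : En n) (x : En n) :
    gradient (fun t : En n => c * (a * ‖t - y‖ ^ 2 + ‖t - z‖ ^ 2)) x
      = c • ((2 * a) • (x - y) + (2 : ℝ) • (x - z)) := by
  apply HasGradientAt.gradient
  rw [hasGradientAt_iff_hasFDerivAt]
  have h1 := ((hasFDerivAt_id (𝕜 := ℝ) x).sub_const y).norm_sq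
  have h2 := ((hasFDerivAt_id (𝕜 := ℝ) x).sub_const z).norm_sq
  have h3 := ((h1.const_mul a).add h2).const_mul c
  refine h3.congr_fderiv ?_
  ext v
  simp
  left
  ring

theorem cmp_grad_sq' {n : ℕ} (a : ℝ) (y : En n) (x : En n) :
    gradient (fun t : En n => -(a * ‖y - t‖ ^ 2)) x = (2 * a) • (y - x) := by
  apply HasGradientAt.gradient
  rw [hasGradientAt_iff_hasFDerivAt]
  have h1 := ((hasFDerivAt_id (𝕜 := ℝ) x).const_sub y).norm_sq
  have h3 := (h1.const_mul a).neg
  refine h3.congr_fderiv ?_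
  ext v
  simp [inner_smul_left]
  ring

theorem cmp_key {n : ℕ} (F : En n → En n → ℝ) (f w wo v vo : En n → ℝ)
    (hF : Continuous fun q : En n × En n => F q.1 q.2) (hco : Coercive F)
    (hf : Continuous f) (lam : ℝ) (hl0 : 0 < lam) (z : En n)
    (hA : ∀ᶠ x in 𝓝 z, ∀ p : En n, F x (lam • p) ≤ lam * F x p)
    (hw : UpperSemicontinuous w) (hwo : UpperSemicontinuous wo)
    (hv : LowerSemicontinuous v) (hvo : LowerSemicontinuous vo)
    (hsub : StatSubIneq F 1 w wo f) (hsup : StatSuperIneq F 1 v vo f)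
    (M : ℝ) (hM : ∀ x, lam * w x - v x ≤ M) (hz : lam * w z - v z = M) :
    (1 - lam) * f z + M ≤ lam * wo z - vo z := by
  have hB : IsCompact (Metric.closedBall z (1 : ℝ)) := isCompact_closedBall z 1
  have hzB : z ∈ Metric.closedBall z (1 : ℝ) := Metric.mem_closedBall_self (by norm_num)
  -- choice of maximizers
  have hex : ∀ k : ℕ, ∃ q : En n × En n,
      q ∈ Metric.closedBall z (1 : ℝ) ×ˢ Metric.closedBall z (1 : ℝ) ∧
      ∀ q' ∈ Metric.closedBall z (1 : ℝ) ×ˢ Metric.closedBall z (1 : ℝ),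
        lam * w q'.1 - v q'.2 - (k : ℝ) * ‖q'.1 - q'.2‖ ^ 2 - ‖q'.1 - z‖ ^ 2 ≤
        lam * w q.1 - v q.2 - (k : ℝ) * ‖q.1 - q.2‖ ^ 2 - ‖q.1 - z‖ ^ 2 := by
    intro k
    have husc : UpperSemicontinuous (fun q : En n × En n =>
        lam * w q.1 + (- v q.2) + (- ((k : ℝ) * ‖q.1 - q.2‖ ^ 2) - ‖q.1 - z‖ ^ 2)) := by
      have h1 : UpperSemicontinuous (fun q : En n × En n => lam * w q.1) := by
        have : UpperSemicontinuous (fun x => lam * w x) :=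
          Continuous.comp_upperSemicontinuous (continuous_const.mul continuous_id) hw
            (fun a b h => mul_le_mul_of_nonneg_left h hl0.le)
        exact this.comp continuous_fst
      have h2 : UpperSemicontinuous (fun q : En n × En n => - v q.2) := by
        have : UpperSemicontinuous (fun x => - v x) :=
          Continuous.comp_lowerSemicontinuous_antitone continuous_neg hv
            (fun a b h => neg_le_neg h)
        exact this.comp continuous_snd
      have h3 : UpperSemicontinuous (fun q : En n × En n =>
          (- ((k : ℝ) * ‖q.1 - q.2‖ ^ 2) - ‖q.1 - z‖ ^ 2)) := by
        apply Continuous.upperSemicontinuous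
        fun_prop
      exact (h1.add h2).add h3
    obtain ⟨q, hq, hmax⟩ := (husc.upperSemicontinuousOn _).exists_isMaxOn
      (s := Metric.closedBall z (1 : ℝ) ×ˢ Metric.closedBall z (1 : ℝ))
      ⟨(z, z), hzB, hzB⟩ (hB.prod hB)
    refine ⟨q, hq, fun q' hq' => ?_⟩
    have := hmax hq'
    simp only [mem_ofPred_eq] at this
    linarith
  choose q hqB hqmax using hex
  have hge : ∀ k : ℕ, M + (k : ℝ) * ‖(q k).1 - (q k).2‖ ^ 2 + ‖(q k).1 - z‖ ^ 2 ≤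
      lam * w (q k).1 - v (q k).2 := by
    intro k
    have := hqmax k (z, z) ⟨hzB, hzB⟩
    simp only [sub_self, norm_zero] at this
    nlinarith
  obtain ⟨W, hW⟩ : ∃ W, ∀ x ∈ Metric.closedBall z (1 : ℝ), w x ≤ W := by
    obtain ⟨a, _, ha⟩ := (hw.upperSemicontinuousOn _).exists_isMaxOn ⟨z, hzB⟩ hB
    exact ⟨w a, fun x hx => ha hx⟩
  obtain ⟨V, hV⟩ : ∃ V, ∀ x ∈ Metric.closedBall z (1 : ℝ), V ≤ v x := by
    obtain ⟨a, _, ha⟩ := (hv.lowerSemicontinuousOn _).exists_isMinOn ⟨z, hzB⟩ hB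
    exact ⟨v a, fun x hx => ha hx⟩
  set C := lam * W - V - M with hC
  have hCk : ∀ k : ℕ, (k : ℝ) * ‖(q k).1 - (q k).2‖ ^ 2 ≤ C := by
    intro k
    have h1 := hge k
    have h2 := mul_le_mul_of_nonneg_left (hW _ (hqB k).1) hl0.le
    have h3 := hV _ (hqB k).2
    have h4 := sq_nonneg ‖(q k).1 - z‖
    linarith
  have hdiff : Tendsto (fun k => (q k).1 - (q k).2) atTop (𝓝 0) := by
    rw [tendsto_zero_iff_norm_tendsto_zero]
    have h1 : Tendsto (fun k : ℕ => ‖(q k).1 - (q k).2‖ ^ 2) atTop (𝓝 0) := by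
      refine squeeze_zero' (Eventually.of_forall fun k => sq_nonneg _) ?_
        (tendsto_const_div_atTop_nhds_zero_nat C)
      filter_upwards [eventually_gt_atTop 0] with k hk
      have hk' : (0 : ℝ) < k := by exact_mod_cast hk
      rw [le_div_iff₀ hk', mul_comm]
      exact hCk k
    have h2 := h1.sqrt
    simpa using h2
  -- ultrafilter limit
  let U : Ultrafilter ℕ := Ultrafilter.of atTop
  have hU : (U : Filter ℕ) ≤ atTop := Ultrafilter.of_le _
  have hdU : Tendsto (fun k => (q k).1 - (q k).2) U (𝓝 0) := hdiff.mono_left hU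
  obtain ⟨xs, hxsB, hxs⟩ : ∃ xs ∈ Metric.closedBall z (1 : ℝ),
      Tendsto (fun k => (q k).1) U (𝓝 xs) := by
    have := hB.ultrafilter_le_nhds (U.map (fun k => (q k).1))
      (by
        rw [le_principal_iff]
        exact mem_map.2 (Filter.univ_mem' (fun k => (hqB k).1)))
    exact this
  have hys : Tendsto (fun k => (q k).2) U (𝓝 xs) := by
    have := hxs.sub hdU
    simpa using this
  have hxz : Tendsto (fun k => ‖(q k).1 - z‖ ^ 2) U (𝓝 0) := by
    rw [Metric.tendsto_nhds]
    intro ε hε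
    have h1 : ∀ᶠ k in (U : Filter ℕ), w (q k).1 < w xs + ε / (4 * lam) :=
      hxs.eventually (hw xs _ (by have : 0 < ε / (4 * lam) := by positivity
                                  linarith))
    have h2 : ∀ᶠ k in (U : Filter ℕ), v xs - ε / 4 < v (q k).2 :=
      hys.eventually (hv xs _ (by linarith))
    filter_upwards [h1, h2] with k h1 h2
    have h3 := hge k
    have h4 := mul_lt_mul_of_pos_left h1 hl0
    have h5 : lam * (w xs + ε / (4 * lam)) = lam * w xs + ε / 4 := by field_simp
    have h6 : 0 ≤ (k : ℝ) * ‖(q k).1 - (q k).2‖ ^ 2 := by positivity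
    have h7 := hM xs
    rw [dist_zero_right, Real.norm_of_nonneg (sq_nonneg _)]
    linarith
  have hxz' : xs = z := by
    have h1 : Tendsto (fun k => ‖(q k).1 - z‖ ^ 2) U (𝓝 (‖xs - z‖ ^ 2)) :=
      ((hxs.sub_const z).norm).pow 2
    have h2 := tendsto_nhds_unique h1 hxz
    have h3 : ‖xs - z‖ = 0 := by simpa using h2
    exact sub_eq_zero.1 (norm_eq_zero.1 h3)
  subst hxz'
  set P : ℕ → En n := fun k => (2 * (k : ℝ)) • ((q k).1 - (q k).2) with hP
  set Q : ℕ → En n := fun k => (2 : ℝ) • ((q k).1 - xs) with hQ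
  have hQ0 : Tendsto Q U (𝓝 0) := by
    have := (hxs.sub_const xs).const_smul (2 : ℝ)
    simpa using this
  -- viscosity inequalities
  have hball : Metric.ball xs (1 : ℝ) ∈ 𝓝 xs := Metric.ball_mem_nhds _ one_pos
  have hsubk : ∀ᶠ k in (U : Filter ℕ),
      F (q k).1 (lam⁻¹ • (P k + Q k)) + (w (q k).1 - wo (q k).1) ≤ f (q k).1 := by
    filter_upwards [hxs.eventually hball] with k hk
    have h := hsub (fun t => lam⁻¹ * ((k : ℝ) * ‖t - (q k).2‖ ^ 2 + ‖t - xs‖ ^ 2))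
      (by
        have a1 : ContDiff ℝ 1 (fun t : En n => ‖t - (q k).2‖ ^ 2) :=
          (contDiff_id.sub contDiff_const).norm_sq ℝ
        have a2 : ContDiff ℝ 1 (fun t : En n => ‖t - xs‖ ^ 2) :=
          (contDiff_id.sub contDiff_const).norm_sq ℝ
        exact contDiff_const.mul ((contDiff_const.mul a1).add a2)) (q k).1
      (by
        filter_upwards [Metric.isOpen_ball.mem_nhds hk] with t ht
        have h := hqmax k (t, (q k).2) ⟨Metric.ball_subset_closedBall ht, (hqB k).2⟩
        simp only at h
        have e : ∀ a b : ℝ, a - lam⁻¹ * b = lam⁻¹ * (lam * a - b) := by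
          intro a b; field_simp
        rw [e, e]
        apply mul_le_mul_of_nonneg_left _ (by positivity)
        linarith)
    rw [cmp_grad_sq] at h
    simpa [hP, hQ] using h
  have hsupk : ∀ᶠ k in (U : Filter ℕ),
      f (q k).2 ≤ F (q k).2 (P k) + (v (q k).2 - vo (q k).2) := by
    filter_upwards [hys.eventually hball] with k hk
    have h := hsup (fun t => -((k : ℝ) * ‖(q k).1 - t‖ ^ 2))
      (by
        have a1 : ContDiff ℝ 1 (fun t : En n => ‖(q k).1 - t‖ ^ 2) :=
          (contDiff_const.sub contDiff_id).norm_sq ℝ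
        exact (contDiff_const.mul a1).neg) (q k).2
      (by
        filter_upwards [Metric.isOpen_ball.mem_nhds hk] with t ht
        have h := hqmax k ((q k).1, t) ⟨(hqB k).1, Metric.ball_subset_closedBall ht⟩
        simp only at h
        linarith)
    rw [cmp_grad_sq'] at h
    simpa [hP] using h
  -- boundedness of the slopes
  have hfx : Tendsto (fun k => f (q k).1) U (𝓝 (f xs)) := (hf.tendsto xs).comp hxs
  have hfy : Tendsto (fun k => f (q k).2) U (𝓝 (f xs)) := (hf.tendsto xs).comp hys
  obtain ⟨r, hr⟩ := hco (f xs + 1 - lam⁻¹ * (M + V) + (wo xs + 1) + 1)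
  have hbd : ∀ᶠ k in (U : Filter ℕ), P k + Q k ∈ Metric.closedBall (0 : En n) (lam * r) := by
    filter_upwards [hsubk, hxs.eventually (hwo xs (wo xs + 1) (by linarith)),
      hfx.eventually (gt_mem_nhds (show f xs < f xs + 1 by linarith))] with k h1 h2 h3
    rw [mem_closedBall_zero_iff]
    by_contra hcon
    push Not at hcon
    have h4 : r ≤ ‖lam⁻¹ • (P k + Q k)‖ := by
      rw [norm_smul, Real.norm_of_nonneg (by positivity), ← div_eq_inv_mul, le_div_iff₀ hl0]
      linarith
    have h5 := hr (q k).1 _ h4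
    have h6 : lam⁻¹ * (M + V) ≤ w (q k).1 := by
      rw [← div_eq_inv_mul, div_le_iff₀ hl0]
      have a1 := hge k
      have a2 := hV _ (hqB k).2
      have a3 : 0 ≤ (k : ℝ) * ‖(q k).1 - (q k).2‖ ^ 2 := by positivity
      have a4 := sq_nonneg ‖(q k).1 - xs‖
      linarith
    linarith
  obtain ⟨ps, _, hps⟩ : ∃ ps ∈ Metric.closedBall (0 : En n) (lam * r),
      Tendsto (fun k => P k + Q k) U (𝓝 ps) :=
    (isCompact_closedBall (0 : En n) (lam * r)).ultrafilter_le_nhds (U.map (fun k => P k + Q k))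
      (by
        rw [le_principal_iff]
        exact hbd)
  have hpP : Tendsto P U (𝓝 ps) := by
    have := hps.sub hQ0
    simpa using this
  have hF1 : Tendsto (fun k => F (q k).1 (P k + Q k)) U (𝓝 (F xs ps)) :=
    (hF.tendsto (xs, ps)).comp (hxs.prodMk_nhds hps)
  have hF2 : Tendsto (fun k => F (q k).2 (P k)) U (𝓝 (F xs ps)) :=
    (hF.tendsto (xs, ps)).comp (hys.prodMk_nhds hpP)
  -- conclusion
  have hT : Tendsto (fun k => f (q k).2 - lam * f (q k).1 + F (q k).1 (P k + Q k)
      - F (q k).2 (P k)) U (𝓝 (f xs - lam * f xs + F xs ps - F xs ps)) :=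
    ((hfy.sub (hfx.const_mul lam)).add hF1).sub hF2
  apply le_of_forall_pos_le_add
  intro ε hε
  have : f xs - lam * f xs + F xs ps - F xs ps ≤ lam * wo xs - vo xs - M + ε := by
    refine le_of_tendsto hT ?_
    have h1 : ∀ᶠ k in (U : Filter ℕ), wo (q k).1 < wo xs + ε / (4 * lam) :=
      hxs.eventually (hwo xs _ (by have : 0 < ε / (4 * lam) := by positivity
                                   linarith))
    have h2 : ∀ᶠ k in (U : Filter ℕ), vo xs - ε / 4 < vo (q k).2 :=
      hys.eventually (hvo xs _ (by linarith))
    filter_upwards [hsubk, hsupk, hxs.eventually hA, h1, h2] with k a1 a2 a3 a4 a5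
    have a6 := a3 (lam⁻¹ • (P k + Q k))
    rw [smul_smul, mul_inv_cancel₀ hl0.ne', one_smul] at a6
    have a7 := mul_le_mul_of_nonneg_left a1 hl0.le
    have a8 := mul_lt_mul_of_pos_left a4 hl0
    have h5 : lam * (wo xs + ε / (4 * lam)) = lam * wo xs + ε / 4 := by field_simp
    have a9 := hge k
    have h6 : 0 ≤ (k : ℝ) * ‖(q k).1 - (q k).2‖ ^ 2 := by positivity
    have h7 := sq_nonneg ‖(q k).1 - xs‖
    linarith
  linarith

theorem cmp_exists_compact (n : ℕ) : ∃ K : Set (En n), IsCompact K ∧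
    ∀ x : En n, ∃ k : Fin n → ℤ, x + intVec n k ∈ K := by
  refine ⟨WithLp.toLp 2 '' (Set.pi univ fun _ => Icc (0 : ℝ) 1), ?_, ?_⟩
  · exact (isCompact_univ_pi fun _ => isCompact_Icc).image (PiLp.continuous_toLp 2 _)
  · intro x
    refine ⟨fun i => - ⌊x i⌋, ⟨fun i => Int.fract (x i), ?_, ?_⟩⟩
    · intro i _
      exact ⟨Int.fract_nonneg _, (Int.fract_lt_one _).le⟩
    · ext i
      simp [intVec, Int.fract, sub_eq_add_neg]

theorem cmp_exists_max {n : ℕ} (g : En n → ℝ) (hg : UpperSemicontinuous g)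
    (hp : ZPeriodic g) : ∃ z, ∀ x, g x ≤ g z := by
  obtain ⟨K, hK, hKx⟩ := cmp_exists_compact n
  obtain ⟨k0, hk0⟩ := hKx 0
  obtain ⟨z, _, hz⟩ := (hg.upperSemicontinuousOn K).exists_isMaxOn ⟨_, hk0⟩ hK
  refine ⟨z, fun x => ?_⟩
  obtain ⟨k, hk⟩ := hKx x
  have := hz hk
  rw [mem_ofPred_eq, hp] at this
  exact this

theorem cmp_half {n : ℕ}
    (F₁ F₂ : En n → En n → ℝ) (f₁ f₂ : En n → ℝ)
    (hF₁cont : Continuous fun q : En n × En n => F₁ q.1 q.2)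
    (hF₂cont : Continuous fun q : En n × En n => F₂ q.1 q.2)
    (hF₁coer : Coercive F₁) (hF₂coer : Coercive F₂)
    (hf₁cont : Continuous f₁) (hf₂cont : Continuous f₂)
    (hA2 : ∀ x : En n, 0 ≤ f₁ x ∧ 0 ≤ f₂ x)
    (lam₀ : ℝ) (hl0 : 0 < lam₀) (hl1 : lam₀ < 1)
    (hA4 : ∀ lam : ℝ, lam₀ ≤ lam → lam ≤ 1 → ∀ x : En n, ¬(f₁ x = 0 ∧ f₂ x = 0) →
        ∀ p : En n, F₁ x (lam • p) ≤ lam * F₁ x p ∧ F₂ x (lam • p) ≤ lam * F₂ x p)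
    (u₁ u₂ v₁ v₂ : En n → ℝ)
    (hu₁per : ZPeriodic u₁) (hu₂per : ZPeriodic u₂)
    (hv₁per : ZPeriodic v₁) (hv₂per : ZPeriodic v₂)
    (hu₁usc : UpperSemicontinuous u₁) (hu₂usc : UpperSemicontinuous u₂)
    (hv₁lsc : LowerSemicontinuous v₁) (hv₂lsc : LowerSemicontinuous v₂)
    (hsub : CellSub F₁ F₂ 1 1 u₁ u₂ f₁ f₂)
    (hsuper : CellSuper F₁ F₂ 1 1 v₁ v₂ f₁ f₂)
    (hbdry : ∀ x : En n, f₁ x = 0 → f₂ x = 0 → u₁ x ≤ v₁ x ∧ u₂ x ≤ v₂ x) :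
    ∀ x : En n, u₁ x ≤ v₁ x := by
  intro x0
  by_contra hcon
  push Not at hcon
  have hneg : ∀ v : En n → ℝ, LowerSemicontinuous v → UpperSemicontinuous (fun x => - v x) :=
    fun v hv => Continuous.comp_lowerSemicontinuous_antitone continuous_neg hv
      (fun a b h => neg_le_neg h)
  have hlow : ∀ v : En n → ℝ, LowerSemicontinuous v → ZPeriodic v → ∃ V, ∀ x, V ≤ v x := by
    intro v hv hp
    obtain ⟨z, hz⟩ := cmp_exists_max (fun x => - v x) (hneg v hv) (fun x k => by simp [hp x k])
    exact ⟨v z, fun x => by have := hz x; linarith⟩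
  obtain ⟨V1, hV1⟩ := hlow v₁ hv₁lsc hv₁per
  obtain ⟨V2, hV2⟩ := hlow v₂ hv₂lsc hv₂per
  obtain ⟨V, hV0, hV1, hV2⟩ : ∃ V : ℝ, 0 ≤ V ∧ (∀ x, -V ≤ v₁ x) ∧ (∀ x, -V ≤ v₂ x) := by
    refine ⟨|V1| + |V2|, by positivity, fun x => ?_, fun x => ?_⟩
    · have := hV1 x
      have := neg_abs_le V1
      have := abs_nonneg V2
      linarith
    · have := hV2 x
      have := neg_abs_le V2
      have := abs_nonneg V1
      linarith
  set δ := u₁ x0 - v₁ x0 with hδ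
  have hδ0 : 0 < δ := by linarith
  set D := |u₁ x0| + V / lam₀ + 1 with hD
  have hVl : 0 ≤ V / lam₀ := by positivity
  have hD0 : 0 < D := by positivity
  obtain ⟨lam, hla, hlb, hlc⟩ : ∃ lam : ℝ, lam₀ ≤ lam ∧ lam < 1 ∧ (1 - lam) * D < δ := by
    have h1 : Tendsto (fun l : ℝ => (1 - l) * D) (𝓝[<] 1) (𝓝 ((1 - 1) * D)) := by
      apply Tendsto.mono_left _ nhdsWithin_le_nhds
      apply Continuous.tendsto (f := fun l : ℝ => (1 - l) * D)
      fun_prop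
    have h2 := h1.eventually (gt_mem_nhds (show (1 - 1) * D < δ by linarith))
    have h3 : ∀ᶠ l in 𝓝[<] (1 : ℝ), lam₀ < l := nhdsWithin_le_nhds (lt_mem_nhds hl1)
    obtain ⟨l, a, b, c⟩ := (h2.and (h3.and self_mem_nhdsWithin)).exists
    exact ⟨l, b.le, c, a⟩
  have hlp : 0 < lam := lt_of_lt_of_le hl0 hla
  have hgu : ∀ u v : En n → ℝ, UpperSemicontinuous u → LowerSemicontinuous v →
      UpperSemicontinuous (fun x => lam * u x - v x) := by
    intro u v hu hv
    have h1 : UpperSemicontinuous (fun x => lam * u x) :=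
      Continuous.comp_upperSemicontinuous (continuous_const.mul continuous_id) hu
        (fun a b h => mul_le_mul_of_nonneg_left h hlp.le)
    simpa [sub_eq_add_neg] using h1.add (hneg v hv)
  obtain ⟨z, hz⟩ := cmp_exists_max (fun x => max (lam * u₁ x - v₁ x) (lam * u₂ x - v₂ x))
    ((hgu u₁ v₁ hu₁usc hv₁lsc).sup (hgu u₂ v₂ hu₂usc hv₂lsc))
    (fun x k => by simp only [hu₁per x k, hu₂per x k, hv₁per x k, hv₂per x k])
  set M := max (lam * u₁ z - v₁ z) (lam * u₂ z - v₂ z) with hMdef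
  have hM1 : ∀ x, lam * u₁ x - v₁ x ≤ M := fun x => (le_max_left _ _).trans (hz x)
  have hM2 : ∀ x, lam * u₂ x - v₂ x ≤ M := fun x => (le_max_right _ _).trans (hz x)
  have hMlow : δ - (1 - lam) * |u₁ x0| ≤ M := by
    have h1 := hM1 x0
    have h2 := mul_le_mul_of_nonneg_left (le_abs_self (u₁ x0)) (show 0 ≤ 1 - lam by linarith)
    linarith
  have hMbig : (1 - lam) * (V / lam₀) < M := by
    have : (1 - lam) * D = (1 - lam) * |u₁ x0| + (1 - lam) * (V / lam₀) + (1 - lam) := by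
      rw [hD]; ring
    linarith
  have hM0 : 0 ≤ M := le_trans (mul_nonneg (by linarith) hVl) hMbig.le
  have hnot : ∀ u v : ℝ, -V ≤ v → u ≤ v → lam * u - v = M → False := by
    intro u v h1 h2 h3
    have h4 : -(V / lam₀) ≤ u := by
      have h5 : -V ≤ lam * u := by linarith
      by_contra hc
      push Not at hc
      have h6 : u < 0 := by linarith
      have h7 : lam * u ≤ lam₀ * u := by nlinarith
      have h8 : lam₀ * u < lam₀ * (-(V / lam₀)) := mul_lt_mul_of_pos_left hc hl0
      have h9 : lam₀ * (-(V / lam₀)) = -V := by field_simp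
      linarith
    have := mul_le_mul_of_nonneg_left h4 (show 0 ≤ 1 - lam by linarith)
    linarith
  have hzA : ¬(f₁ z = 0 ∧ f₂ z = 0) := by
    rintro ⟨h1, h2⟩
    obtain ⟨b1, b2⟩ := hbdry z h1 h2
    rcases max_choice (lam * u₁ z - v₁ z) (lam * u₂ z - v₂ z) with h | h
    · exact hnot _ _ (hV1 z) b1 h.symm
    · exact hnot _ _ (hV2 z) b2 h.symm
  have hopen : ∀ᶠ x in 𝓝 z, ¬(f₁ x = 0 ∧ f₂ x = 0) := by
    have : IsClosed {x | f₁ x = 0 ∧ f₂ x = 0} :=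
      (isClosed_eq hf₁cont continuous_const).inter (isClosed_eq hf₂cont continuous_const)
    exact this.isOpen_compl.mem_nhds hzA
  have hE1 : lam * u₁ z - v₁ z = M → (1 - lam) * f₁ z + M ≤ lam * u₂ z - v₂ z := fun h =>
    cmp_key F₁ f₁ u₁ u₂ v₁ v₂ hF₁cont hF₁coer hf₁cont lam hlp z
      (hopen.mono fun x hx p => (hA4 lam hla hlb.le x hx p).1) hu₁usc hu₂usc hv₁lsc hv₂lsc
      hsub.1 hsuper.1 M hM1 h
  have hE2 : lam * u₂ z - v₂ z = M → (1 - lam) * f₂ z + M ≤ lam * u₁ z - v₁ z := fun h =>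
    cmp_key F₂ f₂ u₂ u₁ v₂ v₁ hF₂cont hF₂coer hf₂cont lam hlp z
      (hopen.mono fun x hx p => (hA4 lam hla hlb.le x hx p).2) hu₂usc hu₁usc hv₂lsc hv₁lsc
      hsub.2 hsuper.2 M hM2 h
  have hp1 := mul_nonneg (show 0 ≤ 1 - lam by linarith) (hA2 z).1
  have hp2 := mul_nonneg (show 0 ≤ 1 - lam by linarith) (hA2 z).2
  have hboth : lam * u₁ z - v₁ z = M ∧ lam * u₂ z - v₂ z = M := by
    have m1 := hM1 z
    have m2 := hM2 z
    rcases max_choice (lam * u₁ z - v₁ z) (lam * u₂ z - v₂ z) with h | h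
    · have := hE1 h.symm
      exact ⟨h.symm, by linarith⟩
    · have := hE2 h.symm
      exact ⟨by linarith, h.symm⟩
  have e1 := hE1 hboth.1
  have e2 := hE2 hboth.2
  have hl' : 1 - lam ≠ 0 := by linarith
  apply hzA
  constructor
  · have : (1 - lam) * f₁ z = 0 := by linarith [hboth.2]
    exact (mul_eq_zero.1 this).resolve_left hl'
  · have : (1 - lam) * f₂ z = 0 := by linarith [hboth.1]
    exact (mul_eq_zero.1 this).resolve_left hl'

/-- Comparison principle for the stationary problem (S1) with the zero set A = {f1 = 0} ∩ {f2 = 0} playing the role of the boundary (Theorem 3.2). -/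

theorem stmt6 (n : ℕ) (hn : 1 ≤ n)
(F₁ F₂ : En n → En n → ℝ) (f₁ f₂ : En n → ℝ)
    (hF₁cont : Continuous fun q : En n × En n => F₁ q.1 q.2)
    (hF₂cont : Continuous fun q : En n × En n => F₂ q.1 q.2)
    (hF₁per : ZPeriodicH F₁) (hF₂per : ZPeriodicH F₂)
    (hF₁coer : Coercive F₁) (hF₂coer : Coercive F₂)
    (hf₁cont : Continuous f₁) (hf₂cont : Continuous f₂)
    (hf₁per : ZPeriodic f₁) (hf₂per : ZPeriodic f₂)
    -- (A2)
    (hA2 : ∀ x : En n, 0 ≤ f₁ x ∧ 0 ≤ f₂ x)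
    -- (A3)
    (hA3 : ∃ x : En n, f₁ x = 0 ∧ f₂ x = 0)
    -- (A4)
    (hA4 : ∃ lam₀ : ℝ, 0 < lam₀ ∧ lam₀ < 1 ∧
      ∀ lam : ℝ, lam₀ ≤ lam → lam ≤ 1 → ∀ x : En n, ¬(f₁ x = 0 ∧ f₂ x = 0) →
        ∀ p : En n, F₁ x (lam • p) ≤ lam * F₁ x p ∧ F₂ x (lam • p) ≤ lam * F₂ x p)
    -- (A5)
    (hA5 : (∀ (x p : En n), 0 ≤ F₁ x p ∧ 0 ≤ F₂ x p) ∧ ∀ x : En n, F₁ x 0 = 0 ∧ F₂ x 0 = 0)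
    (u₁ u₂ v₁ v₂ : En n → ℝ)
    (hu₁per : ZPeriodic u₁) (hu₂per : ZPeriodic u₂)
    (hv₁per : ZPeriodic v₁) (hv₂per : ZPeriodic v₂)
    (hu₁usc : UpperSemicontinuous u₁) (hu₂usc : UpperSemicontinuous u₂)
    (hv₁lsc : LowerSemicontinuous v₁) (hv₂lsc : LowerSemicontinuous v₂)
    (hsub : CellSub F₁ F₂ 1 1 u₁ u₂ f₁ f₂)
    (hsuper : CellSuper F₁ F₂ 1 1 v₁ v₂ f₁ f₂)
    (hbdry : ∀ x : En n, f₁ x = 0 → f₂ x = 0 → u₁ x ≤ v₁ x ∧ u₂ x ≤ v₂ x) :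
    ∀ x : En n, u₁ x ≤ v₁ x ∧ u₂ x ≤ v₂ x := by
  obtain ⟨lam₀, hl0, hl1, hA4⟩ := hA4
  intro x
  constructor
  · exact cmp_half F₁ F₂ f₁ f₂ hF₁cont hF₂cont hF₁coer hF₂coer hf₁cont hf₂cont hA2 lam₀ hl0 hl1
      hA4 u₁ u₂ v₁ v₂ hu₁per hu₂per hv₁per hv₂per hu₁usc hu₂usc hv₁lsc hv₂lsc hsub hsuper hbdry x
  · exact cmp_half F₂ F₁ f₂ f₁ hF₂cont hF₁cont hF₂coer hF₁coer hf₂cont hf₁cont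
      (fun x => (hA2 x).symm) lam₀ hl0 hl1
      (fun l h1 h2 x hx p => (hA4 l h1 h2 x (fun h => hx h.symm) p).symm)
      u₂ u₁ v₂ v₁ hu₂per hu₁per hv₂per hv₁per hu₂usc hu₁usc hv₂lsc hv₁lsc hsub.symm hsuper.symm
      (fun x h1 h2 => (hbdry x h2 h1).symm) x
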